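/- There exists an absolute constant C > 0 such that for all positive integers a, b with n = a·b, there exist integers A ≥ a and B ≥ b such that A·B + 1 is a power of two and A·B ≤ n · exp(C·√(log n)). -/

import Mathlib

lemma fact_aux (s : ℕ) (hs : 1 ≤ s) : ∀ j t u : ℕ, t + u = 2 ^ j → 1 ≤ u →
    ∃ A B : ℕ, A * B + 1 = 2 ^ (2 ^ j * s) ∧ 2 ^ (t * s) ≤ A ∧ 2 ^ (u * s) ≤ 2 * B := by
  intro j
  induction j with
  | zero =>
    intro t u h hu
    have ht : t = 0 := by simp at h; omega
    have hu' : u = 1 := by simp at h; omega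
    subst ht hu'
    have h2 : 2 ^ 1 ≤ 2 ^ s := Nat.pow_le_pow_right (by norm_num) hs
    refine ⟨1, 2 ^ s - 1, ?_, by simp, ?_⟩
    · simp; omega
    · simp only [one_mul]; omega
  | succ j ih =>
    intro t u h hu
    have hp : 2 ^ (2 ^ (j + 1) * s) = 2 ^ (2 ^ j * s) * 2 ^ (2 ^ j * s) := by
      rw [← pow_add]; congr 1; ring
    rw [hp]
    rw [pow_succ] at h
    by_cases hlt : t < 2 ^ j
    · obtain ⟨v, hv⟩ : ∃ v, t + v = 2 ^ j := ⟨2 ^ j - t, by omega⟩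
      obtain ⟨A, B, h1, h2, h3⟩ := ih t v hv (by omega)
      have huv : u = v + 2 ^ j := by omega
      refine ⟨A, B * (2 ^ (2 ^ j * s) + 1), ?_, h2, ?_⟩
      · rw [← h1]; ring
      · rw [huv, add_mul, pow_add]
        calc _ ≤ (2 * B) * (2 ^ (2 ^ j * s) + 1) := Nat.mul_le_mul h3 (by omega)
          _ = _ := by ring
    · obtain ⟨v, hv⟩ : ∃ v, t = v + 2 ^ j := ⟨t - 2 ^ j, by omega⟩
      obtain ⟨A, B, h1, h2, h3⟩ := ih v u (by omega) hu
      refine ⟨A * (2 ^ (2 ^ j * s) + 1), B, ?_, ?_, h3⟩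
      · rw [← h1]; ring
      · rw [hv, add_mul, pow_add]
        exact Nat.mul_le_mul h2 (by omega)

lemma two_pow_clog_le (a : ℕ) (ha : 0 < a) : 2 ^ Nat.clog 2 a ≤ 2 * a := by
  by_cases h : a = 1
  · subst h; simp
  · have h1 := Nat.pow_pred_clog_lt_self (b := 2) (by norm_num) (x := a) (by omega)
    have h2 : 0 < Nat.clog 2 a := Nat.clog_pos (by norm_num) (by omega)
    obtain ⟨m, hm⟩ : ∃ m, Nat.clog 2 a = m + 1 := ⟨Nat.clog 2 a - 1, by omega⟩
    rw [hm] at h1 ⊢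
    simp only [Nat.pred_succ] at h1
    rw [pow_succ]; omega

/-- Choice of the parameters. -/
lemma param_aux (M : ℕ) (hM : 1 ≤ M) : ∃ j s r : ℕ, 1 ≤ s ∧ r * r ≤ M ∧
    M + 2 * s ≤ 2 ^ j * s ∧ 2 ^ j * s ≤ M + 4 * r + 8 := by
  set r := Nat.sqrt M with hr
  have hr1 : 1 ≤ r := by
    rw [hr, Nat.le_sqrt]; omega
  have hr2 : r * r ≤ M := Nat.sqrt_le M
  have hr3 : M < (r + 1) * (r + 1) := Nat.lt_succ_sqrt M
  have hJ1 : r + 2 ≤ 2 ^ Nat.clog 2 (r + 2) := Nat.le_pow_clog (by norm_num) _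
  have hJ2 := two_pow_clog_le (r + 2) (by omega)
  obtain ⟨K, hK⟩ : ∃ K, 2 ^ Nat.clog 2 (r + 2) = K + 2 :=
    ⟨2 ^ Nat.clog 2 (r + 2) - 2, by omega⟩
  rw [hK] at hJ1 hJ2
  refine ⟨Nat.clog 2 (r + 2), M / K + 1, r, Nat.le_add_left _ _, hr2, ?_, ?_⟩
  · rw [hK]
    have := Nat.lt_mul_div_succ M (show 0 < K by omega)
    nlinarith
  · rw [hK]
    have h1 := Nat.mul_div_le M K
    have h2 : M / K ≤ r + 2 := by
      have : M / K < r + 3 := by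
        rw [Nat.div_lt_iff_lt_mul (by omega)]
        nlinarith
      omega
    nlinarith

lemma main_nat (a b : ℕ) (ha : 0 < a) (hb : 0 < b) :
    ∃ A B k r M : ℕ, a ≤ A ∧ b ≤ B ∧ 0 < k ∧ A * B + 1 = 2 ^ k ∧ k ≤ M + 4 * r + 8 ∧
      r * r ≤ M ∧ 2 ^ M ≤ 8 * (a * b) := by
  set x := Nat.clog 2 a with hx
  set y := Nat.clog 2 b with hy
  have hax : a ≤ 2 ^ x := Nat.le_pow_clog (by norm_num) _
  have hby : b ≤ 2 ^ y := Nat.le_pow_clog (by norm_num) _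
  have hxa : 2 ^ x ≤ 2 * a := two_pow_clog_le a ha
  have hyb : 2 ^ y ≤ 2 * b := two_pow_clog_le b hb
  obtain ⟨j, s, r, hs, hr, h1, h2⟩ := param_aux (x + y + 1) (by omega)
  have ht1 := Nat.lt_mul_div_succ x (show 0 < s by omega)
  have ht2 := Nat.mul_div_le x s
  set t := x / s + 1 with ht
  have ht3 : t * s ≤ x + s := by rw [ht]; nlinarith
  have htJ : t ≤ 2 ^ j := by
    by_contra hcon
    push Not at hcon
    have := Nat.mul_le_mul_right s hcon.le
    omega
  obtain ⟨u, hu⟩ : ∃ u, t + u = 2 ^ j := ⟨2 ^ j - t, by omega⟩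
  have hus : y + 1 ≤ u * s := by
    rw [← hu] at h1
    nlinarith
  have hu1 : 1 ≤ u := by
    rcases Nat.eq_zero_or_pos u with h | h
    · subst h; simp at hus
    · exact h
  obtain ⟨A, B, hAB, hA, hB⟩ := fact_aux s hs j t u hu hu1
  refine ⟨A, B, 2 ^ j * s, r, x + y + 1, ?_, ?_, by positivity, hAB, h2, hr, ?_⟩
  · refine hax.trans (le_trans (Nat.pow_le_pow_right (by norm_num) ?_) hA)
    rw [mul_comm]; exact ht1.le
  · have := (Nat.pow_le_pow_right (show 0 < 2 by norm_num) hus).trans hB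
    rw [pow_succ] at this
    omega
  · calc 2 ^ (x + y + 1) = 2 ^ x * 2 ^ y * 2 := by ring
      _ ≤ (2 * a) * (2 * b) * 2 := by gcongr
      _ = _ := by ring

/-- **Lemma C.4.** There is an absolute constant `C > 0` such that for all positive
integers `a, b` with `n = a·b`, there exist `A ≥ a` and `B ≥ b` such that `A·B + 1` is a
power of two and `A·B ≤ n·exp(C·√(log n))`. -/
theorem exists_pow_two_product_factorization :
    ∃ C : ℝ, 0 < C ∧
      ∀ a b : ℕ, 0 < a → 0 < b →
        ∃ A B : ℕ, a ≤ A ∧ b ≤ B ∧ (∃ k : ℕ, 0 < k ∧ A * B + 1 = 2 ^ k) ∧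
          ((A * B : ℕ) : ℝ) ≤
            ((a * b : ℕ) : ℝ) * Real.exp (C * Real.sqrt (Real.log ((a * b : ℕ) : ℝ))) := by
  refine ⟨19, by norm_num, ?_⟩
  intro a b ha hb
  by_cases hn : a * b = 1
  · obtain ⟨rfl, rfl⟩ : a = 1 ∧ b = 1 := by simpa using hn
    exact ⟨1, 1, le_rfl, le_rfl, ⟨1, by norm_num, by norm_num⟩, by simp⟩
  obtain ⟨A, B, k, r, M, hA, hB, hk, hAB, hkM, hr, hM⟩ := main_nat a b ha hb
  refine ⟨A, B, hA, hB, ⟨k, hk, hAB⟩, ?_⟩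
  have hn2 : 2 ≤ a * b := by
    have : 0 < a * b := Nat.mul_pos ha hb
    omega
  generalize a * b = n at *
  have hnR : (2 : ℝ) ≤ n := by exact_mod_cast hn2
  have hl2 : 0 < Real.log 2 := Real.log_pos (by norm_num)
  have hl2' : Real.log 2 ≤ 1 := by linarith [Real.log_two_lt_d9]
  have hL : Real.log 2 ≤ Real.log n := Real.log_le_log (by norm_num) hnR
  have hMR : (M : ℝ) * Real.log 2 ≤ 3 * Real.log 2 + Real.log n := by
    have h : ((2 : ℝ) ^ M) ≤ 2 ^ 3 * n := by
      have : ((2 ^ M : ℕ) : ℝ) ≤ ((8 * n : ℕ) : ℝ) := by exact_mod_cast hM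
      push_cast at this
      linarith
    have h' := Real.log_le_log (by positivity) h
    rw [Real.log_mul (by positivity) (by positivity), Real.log_pow, Real.log_pow] at h'
    push_cast at h'
    exact h'
  have hrR : (r : ℝ) * r ≤ M := by exact_mod_cast hr
  have hs1 : Real.log 2 ≤ Real.sqrt (Real.log n) := by
    apply Real.le_sqrt_of_sq_le
    nlinarith
  have hs2 : (r : ℝ) * Real.log 2 / 2 ≤ Real.sqrt (Real.log n) := by
    apply Real.le_sqrt_of_sq_le
    have e1 : (r : ℝ) * r * Real.log 2 ≤ M * Real.log 2 := by gcongr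
    have e2 : (r : ℝ) * r * Real.log 2 * Real.log 2 ≤ r * r * Real.log 2 * 1 := by gcongr
    nlinarith
  have hkR : (k : ℝ) ≤ M + 4 * r + 8 := by exact_mod_cast hkM
  have hfin : (k : ℝ) * Real.log 2 ≤ Real.log n + 19 * Real.sqrt (Real.log n) := by
    have := mul_le_mul_of_nonneg_right hkR hl2.le
    nlinarith
  have hABR : ((A * B : ℕ) : ℝ) ≤ 2 ^ k := by
    have : A * B ≤ 2 ^ k := by omega
    exact_mod_cast this
  calc ((A * B : ℕ) : ℝ) ≤ 2 ^ k := hABR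
    _ = Real.exp (k * Real.log 2) := by
      rw [mul_comm, Real.exp_mul, Real.exp_log (by norm_num), Real.rpow_natCast]
    _ ≤ Real.exp (Real.log n + 19 * Real.sqrt (Real.log n)) := Real.exp_le_exp.mpr hfin
    _ = _ := by rw [Real.exp_add, Real.exp_log (by linarith)]
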